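/- For every t ≥ 0 and all bounded measurable functions f, g : ℝᵈ → ℝ, one has ∫_{ℝᵈ} (P_t f)(x) g(x) dγ(x) = ∫_{ℝᵈ} f(x) (P_t g)(x) dγ(x); that is, the Ornstein–Uhlenbeck semigroup P_t is symmetric (self-adjoint) with respect to the Gaussian measure γ. -/

import Mathlib

open MeasureTheory Real
open scoped ENNReal RealInnerProductSpace

/-- The centered Gaussian measure `N(0, C)` on `ℝᵈ` (realized as `EuclideanSpace ℝ (Fin k)`),
with covariance matrix `C`, defined via its density with respect to Lebesgue measure. -/
noncomputable def gaussianM {k : ℕ} (C : Matrix (Fin k) (Fin k) ℝ) :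
    Measure (EuclideanSpace ℝ (Fin k)) :=
  MeasureTheory.volume.withDensity fun x =>
    ENNReal.ofReal ((2 * π) ^ (-(k : ℝ) / 2) * C.det ^ (-(1 : ℝ) / 2) *
      Real.exp (-(⟪x, (WithLp.toLp 2 (Matrix.mulVec C⁻¹ x) : EuclideanSpace ℝ (Fin k))⟫) / 2))

/-- The Ornstein–Uhlenbeck (Mehler) semigroup associated to the measure `γ`:
`P_t f (x) = ∫ f (e^{-t/2} x + √(1 - e^{-t}) z) dγ(z)`. -/
noncomputable def OU {k : ℕ} (γ : Measure (EuclideanSpace ℝ (Fin k))) (t : ℝ)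
    (f : EuclideanSpace ℝ (Fin k) → ℝ) (x : EuclideanSpace ℝ (Fin k)) : ℝ :=
  ∫ z, f (Real.exp (-t / 2) • x + Real.sqrt (1 - Real.exp (-t)) • z) ∂γ

namespace OUAux

set_option linter.unusedSectionVars false

variable {E : Type*} [NormedAddCommGroup E] [InnerProductSpace ℝ E] [FiniteDimensional ℝ E]
  [MeasurableSpace E] [BorelSpace E]

theorem coercive (L : E →L[ℝ] E) (hL : ∀ x, x ≠ 0 → 0 < ⟪x, L x⟫) :
    ∃ a : ℝ, 0 < a ∧ ∀ x, a * ‖x‖ ^ 2 ≤ ⟪x, L x⟫ := by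
  obtain ⟨a, ha, h⟩ := (isCompact_sphere (0 : E) 1).exists_forall_le' (a := (0 : ℝ))
    (f := fun x => ⟪x, L x⟫) (by fun_prop) (fun b hb => hL b (by
      rintro rfl
      simp at hb))
  refine ⟨a, ha, fun x => ?_⟩
  by_cases hx : x = 0
  · simp [hx]
  have hn : ‖x‖ ≠ 0 := norm_ne_zero_iff.mpr hx
  have := h (‖x‖⁻¹ • x) (by simp [norm_smul, hn])
  simp only [map_smul, inner_smul_left, inner_smul_right] at this
  simp only [conj_trivial] at this
  have h2 := mul_le_mul_of_nonneg_right this (sq_nonneg ‖x‖)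
  have h3 : ‖x‖⁻¹ * (‖x‖⁻¹ * ⟪x, L x⟫) * ‖x‖ ^ 2 = ⟪x, L x⟫ := by
    field_simp
  linarith

theorem integrable_gauss (L : E →L[ℝ] E) (hL : ∀ x, x ≠ 0 → 0 < ⟪x, L x⟫) (K : ℝ) :
    Integrable (fun x => K * Real.exp (-⟪x, L x⟫ / 2)) := by
  obtain ⟨a, ha, h⟩ := coercive L hL
  apply Integrable.const_mul
  have h1 := (GaussianFourier.integrable_cexp_neg_mul_sq_norm_add (V := E) (b := ((a / 2 : ℝ) : ℂ))
    (by simpa using ha) 0 0).norm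
  refine h1.mono' (by
    apply Continuous.aestronglyMeasurable
    fun_prop) (Filter.Eventually.of_forall fun x => ?_)
  rw [Complex.norm_exp, Real.norm_eq_abs, abs_of_pos (Real.exp_pos _)]
  apply Real.exp_le_exp.mpr
  have : (-((a / 2 : ℝ) : ℂ) * (‖x‖ : ℂ) ^ 2 + 0 * ((⟪(0 : E), x⟫ : ℝ) : ℂ)).re = - (a / 2) * ‖x‖ ^ 2 := by
    rw [zero_mul, add_zero]
    norm_cast
  rw [this]
  linarith [h x]

/-- The rotation (reflection) of the product space. -/
noncomputable def rot (E : Type*) [NormedAddCommGroup E] [InnerProductSpace ℝ E] (c s : ℝ) :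
    (E × E) →ₗ[ℝ] (E × E) :=
  (c • LinearMap.fst ℝ E E + s • LinearMap.snd ℝ E E).prod
    (s • LinearMap.fst ℝ E E - c • LinearMap.snd ℝ E E)

theorem rot_apply (c s : ℝ) (p : E × E) : rot E c s p = (c • p.1 + s • p.2, s • p.1 - c • p.2) := rfl

theorem rot_rot (c s : ℝ) (h : c ^ 2 + s ^ 2 = 1) (p : E × E) : rot E c s (rot E c s p) = p := by
  simp only [rot_apply]
  ext
  · have : c • (c • p.1 + s • p.2) + s • (s • p.1 - c • p.2) = (c ^ 2 + s ^ 2) • p.1 := by module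
    simp only [this, h, one_smul]
  · have : s • (c • p.1 + s • p.2) - c • (s • p.1 - c • p.2) = (c ^ 2 + s ^ 2) • p.2 := by module
    simp only [this, h, one_smul]

theorem rot_vol (c s : ℝ) (h : c ^ 2 + s ^ 2 = 1) :
    MeasurePreserving (rot E c s) (volume.prod volume : Measure (E × E)) (volume.prod volume) := by
  have h1 : rot E c s * rot E c s = 1 := LinearMap.ext fun p => rot_rot c s h p
  have h2 : LinearMap.det (rot E c s) * LinearMap.det (rot E c s) = 1 := by
    rw [← map_mul, h1, map_one]
  have h3 : |LinearMap.det (rot E c s)| = 1 := by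
    rcases mul_self_eq_one_iff.mp h2 with h | h <;> simp [h]
  refine ⟨(rot E c s).continuous_of_finiteDimensional.measurable, ?_⟩
  rw [Measure.map_linearMap_addHaar_eq_smul_addHaar _ (fun h0 => by simp [h0] at h2), abs_inv, h3]
  simp

theorem mp_withDensity {α : Type*} [MeasurableSpace α] {μ : Measure α} {T : α → α}
    (hT : MeasurePreserving T μ μ) {φ : α → ℝ≥0∞} (hφ : Measurable φ) (h : ∀ x, φ (T x) = φ x) :
    MeasurePreserving T (μ.withDensity φ) (μ.withDensity φ) := by
  refine ⟨hT.measurable, Measure.ext fun A hA => ?_⟩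
  rw [Measure.map_apply hT.measurable hA, withDensity_apply _ hA,
    withDensity_apply _ (hT.measurable hA), ← hT.setLIntegral_comp_preimage hA hφ]
  simp [h]

theorem symm_main (L : E →L[ℝ] E) (hL : ∀ x, x ≠ 0 → 0 < ⟪x, L x⟫) (K : ℝ) (hK : 0 ≤ K)
    (γ : Measure E)
    (hγ : γ = volume.withDensity fun x => ENNReal.ofReal (K * Real.exp (-⟪x, L x⟫ / 2)))
    (c s : ℝ) (h : c ^ 2 + s ^ 2 = 1) (f g : E → ℝ) (hf : Measurable f) (hg : Measurable g)
    (Mf : ℝ) (hfb : ∀ x, |f x| ≤ Mf) (Mg : ℝ) (hgb : ∀ x, |g x| ≤ Mg) :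
    ∫ x, (∫ z, f (c • x + s • z) ∂γ) * g x ∂γ = ∫ x, f x * (∫ z, g (c • x + s • z) ∂γ) ∂γ := by
  have hfin : IsFiniteMeasure γ := by
    rw [hγ]
    exact isFiniteMeasure_withDensity_ofReal (integrable_gauss L hL K).2
  have hφ : Measurable fun x : E => ENNReal.ofReal (K * Real.exp (-⟪x, L x⟫ / 2)) := by
    apply Measurable.ennreal_ofReal
    apply Continuous.measurable
    fun_prop
  have hmp : MeasurePreserving (rot E c s) (γ.prod γ) (γ.prod γ) := by
    rw [hγ, prod_withDensity hφ hφ]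
    refine mp_withDensity (rot_vol c s h) (by fun_prop) fun p => ?_
    simp only [rot_apply]
    rw [← ENNReal.ofReal_mul (by positivity), ← ENNReal.ofReal_mul (by positivity)]
    congr 1
    rw [mul_mul_mul_comm, ← Real.exp_add, mul_mul_mul_comm K, ← Real.exp_add]
    congr 2
    simp only [map_add, map_sub, map_smul, inner_add_left, inner_add_right, inner_sub_left,
      inner_sub_right, inner_smul_left, inner_smul_right, conj_trivial]
    linear_combination (-1 / 2) * (⟪p.1, L p.1⟫ + ⟪p.2, L p.2⟫) * h
  have key : ∀ u v : E → ℝ, Measurable u → Measurable v → ∀ Mu, (∀ x, |u x| ≤ Mu) →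
      ∀ Mv, (∀ x, |v x| ≤ Mv) →
      ∫ x, (∫ z, u (c • x + s • z) ∂γ) * v x ∂γ
        = ∫ p, u (c • p.1 + s • p.2) * v p.1 ∂(γ.prod γ) := by
    intro u v hu hv Mu hMu Mv hMv
    rw [integral_prod]
    · simp_rw [integral_mul_const]
    · refine Integrable.of_bound (C := Mu * Mv) (Measurable.aestronglyMeasurable (by fun_prop))
        (Filter.Eventually.of_forall fun p => ?_)
      rw [norm_mul]
      exact mul_le_mul (hMu _) (hMv _) (norm_nonneg _) ((abs_nonneg _).trans (hMu 0))
  rw [key f g hf hg Mf hfb Mg hgb]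
  simp_rw [mul_comm (f _)]
  rw [key g f hg hf Mg hgb Mf hfb]
  have hF : Measurable fun p : E × E => g (c • p.1 + s • p.2) * f p.1 := by fun_prop
  conv_lhs => rw [← hmp.map_eq]
  rw [integral_map hmp.measurable.aemeasurable
    (Measurable.aestronglyMeasurable (by fun_prop))]
  refine integral_congr_ae (Filter.Eventually.of_forall fun p => ?_)
  have h1 := congrArg Prod.fst (rot_rot c s h p)
  simp only [rot_apply] at h1 ⊢
  rw [h1, mul_comm]

end OUAux

/-- The Ornstein–Uhlenbeck semigroup is symmetric (self-adjoint) with respect to the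
Gaussian measure `γ = N(0, C)`. -/
theorem ou_semigroup_symmetric (d : ℕ) (hd : 0 < d)
    (C : Matrix (Fin d) (Fin d) ℝ) (hC : C.PosDef)
    (t : ℝ) (ht : 0 ≤ t)
    (f g : EuclideanSpace ℝ (Fin d) → ℝ)
    (hf : Measurable f) (hg : Measurable g)
    (Mf : ℝ) (hfb : ∀ x, |f x| ≤ Mf) (Mg : ℝ) (hgb : ∀ x, |g x| ≤ Mg) :
    ∫ x, OU (gaussianM C) t f x * g x ∂(gaussianM C)
      = ∫ x, f x * OU (gaussianM C) t g x ∂(gaussianM C) := by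
  refine OUAux.symm_main (LinearMap.toContinuousLinearMap (Matrix.toLpLin 2 2 C⁻¹)) (fun x hx => ?_)
    ((2 * π) ^ (-(d : ℝ) / 2) * C.det ^ (-(1 : ℝ) / 2)) ?_ (gaussianM C) rfl
    (Real.exp (-t / 2)) (Real.sqrt (1 - Real.exp (-t))) ?_ f g hf hg Mf hfb Mg hgb
  · have hx' : x.ofLp ≠ 0 := fun h0 => hx (by ext i; simp [h0])
    have := hC.inv.dotProduct_mulVec_pos hx'
    rw [LinearMap.coe_toContinuousLinearMap', PiLp.inner_apply]
    simpa [dotProduct, mul_comm] using this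
  · have := hC.det_pos
    positivity
  · have h1 : Real.exp (-t) ≤ 1 := Real.exp_le_one_iff.mpr (by linarith)
    rw [Real.sq_sqrt (by linarith), sq, ← Real.exp_add]
    ring_nf
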